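/- arXiv:2604.22394 — 4 statements merged into one kernel-verified Lean document; each statement's English description precedes it below -/
import Mathlib

section
/- Let F be a topological space and r an equivalence relation on F; endow the quotient F/r with the quotient topology and let q : F → F/r be the quotient map. Call a subset of F saturated if it is a union of equivalence classes of r. Assume that every point of F has a saturated open neighbourhood whose closure is compact. Then for every subset K ⊆ F/r that is both compact and closed, the preimage q⁻¹(K) is compact. -/
/-!
The image of a saturated open set under a quotient map is open, so the hypothesis says that each
point of the base has a neighbourhood whose preimage lies in a compact set. Finitely many of these
neighbourhoods cover `K`, so the preimage of `K` is a closed subset of a compact set.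
-/

open Set Topology

theorem preimage_image_eq_of_saturated {α β : Type*} {f : α → β} {s : Set α}
    (hs : ∀ ⦃a b : α⦄, a ∈ s → f a = f b → b ∈ s) : f ⁻¹' (f '' s) = s :=
  Subset.antisymm (fun _ ⟨_, ha, hab⟩ => hs ha hab) (subset_preimage_image f s)

section

variable {X Y : Type*} [TopologicalSpace X] [TopologicalSpace Y] {f : X → Y} {K : Set Y}

theorem isOpen_image_of_isQuotientMap_of_saturated (hf : IsQuotientMap f) {U : Set X}
    (hU : IsOpen U) (hUs : ∀ ⦃a b : X⦄, a ∈ U → f a = f b → b ∈ U) : IsOpen (f '' U) := by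
  rwa [← hf.isOpen_preimage, preimage_image_eq_of_saturated hUs]

theorem exists_isCompact_superset_preimage_of_nhdsWithin (hK : IsCompact K)
    (h : ∀ y ∈ K, ∃ V ∈ 𝓝[K] y, ∃ C, IsCompact C ∧ f ⁻¹' V ⊆ C) :
    ∃ C, IsCompact C ∧ f ⁻¹' K ⊆ C := by
  refine hK.induction_on (p := fun V => ∃ C, IsCompact C ∧ f ⁻¹' V ⊆ C) ?empty ?mono ?union h
  case empty => exact ⟨∅, isCompact_empty, preimage_empty.subset⟩
  case mono =>
    rintro V W hVW ⟨C, hC, hWC⟩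
    exact ⟨C, hC, (preimage_mono hVW).trans hWC⟩
  case union =>
    rintro V W ⟨C, hC, hVC⟩ ⟨D, hD, hWD⟩
    exact ⟨C ∪ D, hC.union hD, union_subset_union hVC hWD⟩

theorem isCompact_preimage_of_nhdsWithin (hf : Continuous f) (hK : IsCompact K)
    (hKc : IsClosed K) (h : ∀ y ∈ K, ∃ V ∈ 𝓝[K] y, ∃ C, IsCompact C ∧ f ⁻¹' V ⊆ C) :
    IsCompact (f ⁻¹' K) := by
  obtain ⟨C, hC, hKC⟩ := exists_isCompact_superset_preimage_of_nhdsWithin hK h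
  exact hC.of_isClosed_subset (hKc.preimage hf) hKC

theorem quotient_map_proper_of_saturated_precompact_nbhds_general (hf : IsQuotientMap f)
    (hK : IsCompact K) (hKc : IsClosed K)
    (h : ∀ x ∈ f ⁻¹' K, ∃ U : Set X, IsOpen U ∧ x ∈ U ∧
      (∀ ⦃a b : X⦄, a ∈ U → f a = f b → b ∈ U) ∧ ∃ C, IsCompact C ∧ U ⊆ C) :
    IsCompact (f ⁻¹' K) := by
  refine isCompact_preimage_of_nhdsWithin hf.continuous hK hKc fun y hy => ?_
  obtain ⟨x, rfl⟩ := hf.surjective y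
  obtain ⟨U, hUo, hxU, hUs, C, hC, hUC⟩ := h x hy
  have hfU : f '' U ∈ 𝓝 (f x) :=
    (isOpen_image_of_isQuotientMap_of_saturated hf hUo hUs).mem_nhds (mem_image_of_mem f hxU)
  have hfUC : f ⁻¹' (f '' U) ⊆ C := (preimage_image_eq_of_saturated hUs).trans_subset hUC
  exact ⟨f '' U, mem_nhdsWithin_of_mem_nhds hfU, C, hC, hfUC⟩

end

/-- **Lemma 6.8 (topological core).** If every point of `F` has a saturated open
neighbourhood with compact closure, then the quotient map `q : F → F/r` is proper:
the preimage of every compact closed set is compact. -/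
theorem quotient_map_proper_of_saturated_precompact_nbhds
    {F : Type*} [TopologicalSpace F] (r : Setoid F)
    (h : ∀ x : F, ∃ U : Set F, IsOpen U ∧ x ∈ U ∧
      (∀ ⦃a b : F⦄, a ∈ U → r.r a b → b ∈ U) ∧ IsCompact (closure U)) :
    ∀ K : Set (Quotient r), IsCompact K → IsClosed K →
      IsCompact (Quotient.mk r ⁻¹' K) := by
  refine fun K hK hKc =>
    quotient_map_proper_of_saturated_precompact_nbhds_general isQuotientMap_quot_mk hK hKc
      fun x _ => ?_
  obtain ⟨U, hUo, hxU, hUs, hUc⟩ := h x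
  exact ⟨U, hUo, hxU, fun _ _ ha hab => hUs ha (Quotient.exact hab), closure U, hUc, subset_closure⟩
end

section
/- Let E be a finite-dimensional real normed vector space and let v : ℝ × E → E be continuous and locally Lipschitz (every point of ℝ × E has a neighbourhood on which v is Lipschitz). Let S ⊆ E be a closed set such that v(t, x) = 0 for all x ∈ S and all t ∈ [0,1], and assume that every connected component of E ∖ S is bounded. Then for every x₀ ∈ E there exists a curve γ : ℝ → E with γ(0) = x₀ such that γ has derivative v(t, γ(t)) at every t ∈ [0,1]; that is, the non-autonomous ODE γ'(t) = v(t, γ(t)) has a solution defined on all of [0,1] through every initial point. -/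
open Set

/-!
The set `Z` of points where `v` vanishes at all times is closed and contains `S`, and its points
give constant solutions. Otherwise let `C` be the component of `Zᶜ` through `x₀`: it lies in a
component of `Sᶜ`, so it is bounded, and its frontier lies in `Z`. A segment leaving `C` crosses the
frontier, so cutting `v` off to zero outside `C` preserves its Lipschitz constant, and the bounded,
globally Lipschitz field so obtained has an integral curve through `x₀` on the whole time interval.
This curve cannot leave `C`: points outside `C` are equilibria of the truncated field, and by
uniqueness a solution reaching one is constant. On `C` the two fields agree.
-/

open Bornology
open scoped NNReal

section Topology

variable {X : Type*} [TopologicalSpace X]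

theorem inter_frontier_nonempty_of_isPreconnected {s C : Set X} (hs : IsPreconnected s)
    (hC : (s ∩ C).Nonempty) (hC' : (s \ C).Nonempty) : (s ∩ frontier C).Nonempty := by
  by_contra hempty
  have disjoint_frontier : ∀ z ∈ s, z ∉ frontier C := fun z hz hzC ↦ hempty ⟨z, hz, hzC⟩
  have mem_interior : ∀ z ∈ s, z ∈ closure C → z ∈ interior C := fun z hz hzC ↦
    by_contra fun h ↦ disjoint_frontier z hz ⟨hzC, h⟩
  obtain ⟨x, hx, hxC⟩ := hC
  obtain ⟨y, hy, hyC⟩ := hC'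
  have hsC : s ⊆ interior C := hs.subset_of_closure_inter_subset isOpen_interior
    ⟨x, hx, mem_interior x hx (subset_closure hxC)⟩
    fun z hz ↦ mem_interior z hz.2 (closure_mono interior_subset hz.1)
  exact hyC (interior_subset (hsC hy))

theorem frontier_connectedComponentIn_subset_compl [LocallyConnectedSpace X] {U : Set X}
    (hU : IsOpen U) (x : X) : frontier (connectedComponentIn U x) ⊆ Uᶜ := by
  intro z hz hzU
  obtain ⟨y, hyz, hyx⟩ := mem_closure_iff.1 hz.1 _ hU.connectedComponentIn
    (mem_connectedComponentIn hzU)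
  have components_eq : connectedComponentIn U z = connectedComponentIn U x :=
    (connectedComponentIn_eq hyz).trans (connectedComponentIn_eq hyx).symm
  rw [hU.connectedComponentIn.frontier_eq, ← components_eq] at hz
  exact hz.2 (mem_connectedComponentIn hzU)

theorem isClosed_setOf_forall_mem_eq_zero {T Y : Type*} [TopologicalSpace T] [TopologicalSpace Y]
    [T1Space Y] [Zero Y] {f : T × X → Y} {I : Set T} (hf : ContinuousOn f (I ×ˢ univ)) :
    IsClosed {x | ∀ t ∈ I, f (t, x) = 0} := by
  simp only [ofPred_forall]
  refine isClosed_biInter fun t ht ↦ isClosed_singleton.preimage (f := fun x ↦ f (t, x)) ?_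
  exact hf.comp_continuous (by fun_prop) fun x ↦ ⟨ht, mem_univ x⟩

end Topology

theorem lipschitzWith_indicator_of_eqOn_frontier {E F : Type*} [SeminormedAddCommGroup E]
    [NormedSpace ℝ E] [SeminormedAddCommGroup F] {f : E → F} {C : Set E} {K : ℝ≥0}
    (hf : LipschitzOnWith K f (closure C)) (hzero : EqOn f 0 (frontier C)) :
    LipschitzWith K (C.indicator f) := by
  have norm_le_of_notMem : ∀ x ∈ C, ∀ y ∉ C, ‖f x‖ ≤ K * dist x y := by
    intro x hx y hy
    obtain ⟨z, hz, hzC⟩ := inter_frontier_nonempty_of_isPreconnected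
      (convex_segment x y).isPreconnected ⟨x, left_mem_segment ℝ x y, hx⟩
      ⟨y, right_mem_segment ℝ x y, hy⟩
    have hxz : dist x z ≤ dist x y := by
      linarith [dist_add_dist_of_mem_segment hz, dist_nonneg (x := z) (y := y)]
    calc ‖f x‖ = dist (f x) (f z) := by rw [hzero hzC, Pi.zero_apply, dist_zero_right]
      _ ≤ K * dist x z := hf.dist_le_mul x (subset_closure hx) z hzC.1
      _ ≤ K * dist x y := by gcongr
  refine LipschitzWith.of_dist_le_mul fun x y ↦ ?_
  by_cases hx : x ∈ C <;> by_cases hy : y ∈ C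
  · simpa [hx, hy] using hf.dist_le_mul x (subset_closure hx) y (subset_closure hy)
  · simpa [hx, hy] using norm_le_of_notMem x hx y hy
  · simpa [hx, hy, dist_comm] using norm_le_of_notMem y hy x hx
  · simpa [hx, hy] using mul_nonneg K.coe_nonneg dist_nonneg

section IntegralCurves

variable {E : Type*} [NormedAddCommGroup E] [NormedSpace ℝ E] {v : ℝ → E → E} {γ : ℝ → E}
  {a b t₀ : ℝ} {x₀ : E} {K : ℝ≥0} {L : ℝ}

theorem exists_isIntegralCurveOn_Icc_of_lipschitzWith_of_norm_le [CompleteSpace E]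
    (hlip : ∀ t ∈ Icc a b, LipschitzWith K (v t))
    (hcont : ∀ x, ContinuousOn (v · x) (Icc a b))
    (hbound : ∀ t ∈ Icc a b, ∀ x, ‖v t x‖ ≤ L) (ht₀ : t₀ ∈ Icc a b) (x₀ : E) :
    ∃ γ : ℝ → E, γ t₀ = x₀ ∧ IsIntegralCurveOn γ v (Icc a b) := by
  have hv : IsPicardLindelof v ⟨t₀, ht₀⟩ x₀ (L.toNNReal * (b - a).toNNReal) 0 L.toNNReal K :=
    { lipschitzOnWith := fun t ht ↦ (hlip t ht).lipschitzOnWith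
      continuousOn := fun x _ ↦ hcont x
      norm_le := fun t ht x _ ↦ (hbound t ht x).trans (Real.le_coe_toNNReal L)
      mul_max_le := by
        rw [NNReal.coe_mul, NNReal.coe_zero, sub_zero]
        gcongr
        refine le_trans ?_ (Real.le_coe_toNNReal (b - a))
        exact max_le (by linarith [ht₀.1]) (by linarith [ht₀.2]) }
  exact hv.exists_eq_forall_mem_Icc_hasDerivWithinAt₀

theorem eqOn_const_of_isIntegralCurveOn_Ioo (hlip : ∀ t ∈ Ioo a b, LipschitzWith K (v t))
    (hγ : IsIntegralCurveOn γ v (Ioo a b)) (ht₀ : t₀ ∈ Ioo a b)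
    (hzero : ∀ t ∈ Ioo a b, v t (γ t₀) = 0) : EqOn γ (fun _ ↦ γ t₀) (Ioo a b) :=
  ODE_solution_unique_of_mem_Ioo (s := fun _ ↦ univ) (fun t ht ↦ (hlip t ht).lipschitzOnWith) ht₀
    (fun t ht ↦ ⟨(hγ t ht).hasDerivAt (isOpen_Ioo.mem_nhds ht), mem_univ _⟩)
    (fun t ht ↦ ⟨hzero t ht ▸ hasDerivAt_const t (γ t₀), mem_univ _⟩) rfl

theorem exists_forall_mem_Ioo_hasDerivAt_of_eqOn_frontier [CompleteSpace E] {C : Set E}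
    (hlip : ∀ t ∈ Icc a b, LipschitzOnWith K (v t) (closure C))
    (hcont : ∀ x ∈ C, ContinuousOn (v · x) (Icc a b))
    (hbound : ∀ t ∈ Icc a b, ∀ x ∈ C, ‖v t x‖ ≤ L)
    (hzero : ∀ t ∈ Icc a b, EqOn (v t) 0 (frontier C)) (ht₀ : t₀ ∈ Ioo a b) (hx₀ : x₀ ∈ C) :
    ∃ γ : ℝ → E, γ t₀ = x₀ ∧ ∀ t ∈ Ioo a b, γ t ∈ C ∧ HasDerivAt γ (v t (γ t)) t := by
  let w : ℝ → E → E := fun t ↦ C.indicator (v t)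
  have hwlip : ∀ t ∈ Icc a b, LipschitzWith K (w t) := fun t ht ↦
    lipschitzWith_indicator_of_eqOn_frontier (hlip t ht) (hzero t ht)
  have hwcont : ∀ x, ContinuousOn (w · x) (Icc a b) := by
    intro x
    by_cases hx : x ∈ C
    · simpa only [w, indicator_of_mem hx] using hcont x hx
    · simpa only [w, indicator_of_notMem hx] using continuousOn_const
  have hwbound : ∀ t ∈ Icc a b, ∀ x, ‖w t x‖ ≤ L := by
    intro t ht x
    by_cases hx : x ∈ C
    · simpa only [w, indicator_of_mem hx] using hbound t ht x hx
    · simpa only [w, indicator_of_notMem hx, norm_zero] using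
        (norm_nonneg _).trans (hbound t ht x₀ hx₀)
  obtain ⟨γ, hγ₀, hγ⟩ := exists_isIntegralCurveOn_Icc_of_lipschitzWith_of_norm_le hwlip hwcont
    hwbound (Ioo_subset_Icc_self ht₀) x₀
  have mem_C : ∀ t ∈ Ioo a b, γ t ∈ C := by
    intro t ht
    by_contra hγt
    have hconst : γ t₀ = γ t := eqOn_const_of_isIntegralCurveOn_Ioo
      (fun s hs ↦ hwlip s (Ioo_subset_Icc_self hs)) (hγ.mono Ioo_subset_Icc_self) ht
      (fun s _ ↦ indicator_of_notMem hγt (v s)) ht₀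
    exact hγt (hconst ▸ hγ₀ ▸ hx₀)
  refine ⟨γ, hγ₀, fun t ht ↦ ⟨mem_C t ht, ?_⟩⟩
  simpa only [w, indicator_of_mem (mem_C t ht)] using
    (hγ t (Ioo_subset_Icc_self ht)).hasDerivAt (Icc_mem_nhds ht.1 ht.2)

end IntegralCurves

section Completeness

variable {E : Type*} [NormedAddCommGroup E] [NormedSpace ℝ E] {v : ℝ × E → E} {a b t₀ : ℝ}

theorem exists_forall_mem_Icc_hasDerivAt_of_isCompact_closure [CompleteSpace E]
    {C : Set E} {x₀ : E} (hC : IsCompact (closure C))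
    (hlip : LocallyLipschitzOn (Icc a b ×ˢ closure C) v)
    (hzero : ∀ x ∈ frontier C, ∀ t ∈ Icc a b, v (t, x) = 0) (ht₀ : t₀ ∈ Icc a b) (hx₀ : x₀ ∈ C) :
    ∃ γ : ℝ → E, γ t₀ = x₀ ∧ ∀ t ∈ Icc a b, γ t ∈ C ∧ HasDerivAt γ (v (t, γ t)) t := by
  have hcompact : IsCompact (Icc a b ×ˢ closure C) := isCompact_Icc.prod hC
  obtain ⟨K, hK⟩ := hlip.exists_lipschitzOnWith_of_compact hcompact
  obtain ⟨L, hL⟩ := hcompact.exists_bound_of_continuousOn hlip.continuousOn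
  have hab : a ≤ b := ht₀.1.trans ht₀.2
  -- Freezing time outside `[a, b]` lets the curve run past the endpoints, where a two-sided
  -- derivative is required.
  let τ : ℝ → ℝ := fun t ↦ projIcc a b hab t
  have hτ : ∀ t, τ t ∈ Icc a b := fun t ↦ (projIcc a b hab t).2
  have hτ_eq : ∀ t ∈ Icc a b, τ t = t := fun t ht ↦ congrArg Subtype.val (projIcc_of_mem hab ht)
  have hτ_cont : Continuous τ := continuous_subtype_val.comp continuous_projIcc
  have hfrozen_lip : ∀ t, LipschitzOnWith K (fun x ↦ v (τ t, x)) (closure C) := fun t ↦ by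
    simpa only [mul_one, Function.comp_def] using
      hK.comp (LipschitzWith.prodMk_left (τ t)).lipschitzOnWith fun x hx ↦ ⟨hτ t, hx⟩
  have hfrozen_cont : ∀ x ∈ C, Continuous fun t ↦ v (τ t, x) := fun x hx ↦
    hlip.continuousOn.comp_continuous (by fun_prop) fun t ↦ ⟨hτ t, subset_closure hx⟩
  have hsub : Icc a b ⊆ Ioo (a - 1) (b + 1) := Icc_subset_Ioo (by linarith) (by linarith)
  obtain ⟨γ, hγ₀, hγ⟩ := exists_forall_mem_Ioo_hasDerivAt_of_eqOn_frontier
    (v := fun t x ↦ v (τ t, x)) (fun t _ ↦ hfrozen_lip t)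
    (fun x hx ↦ (hfrozen_cont x hx).continuousOn)
    (fun t _ x hx ↦ hL (τ t, x) ⟨hτ t, subset_closure hx⟩)
    (fun t _ x hx ↦ hzero x hx (τ t) (hτ t)) (hsub ht₀) hx₀
  exact ⟨γ, hγ₀, fun t ht ↦ by simpa only [hτ_eq t ht] using hγ t (hsub ht)⟩

theorem ode_complete_of_vanishing_on_closed_set_general [FiniteDimensional ℝ E]
    (hlip : LocallyLipschitzOn (Icc a b ×ˢ univ) v) {S : Set E}
    (hzero : ∀ x ∈ S, ∀ t ∈ Icc a b, v (t, x) = 0)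
    (hbounded : ∀ x ∈ Sᶜ, IsBounded (connectedComponentIn Sᶜ x)) (ht₀ : t₀ ∈ Icc a b) (x₀ : E) :
    ∃ γ : ℝ → E, γ t₀ = x₀ ∧ ∀ t ∈ Icc a b, HasDerivAt γ (v (t, γ t)) t := by
  let Z : Set E := {x | ∀ t ∈ Icc a b, v (t, x) = 0}
  have hZ : IsClosed Z := isClosed_setOf_forall_mem_eq_zero hlip.continuousOn
  by_cases hx₀ : x₀ ∈ Z
  · exact ⟨fun _ ↦ x₀, rfl, fun t ht ↦ hx₀ t ht ▸ hasDerivAt_const t x₀⟩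
  have hSZ : S ⊆ Z := hzero
  have := FiniteDimensional.complete ℝ E
  have := FiniteDimensional.proper ℝ E
  have hC : IsBounded (connectedComponentIn Zᶜ x₀) :=
    (hbounded x₀ fun h ↦ hx₀ (hSZ h)).subset
      (connectedComponentIn_mono x₀ (compl_subset_compl.2 hSZ))
  have hfrontier : frontier (connectedComponentIn Zᶜ x₀) ⊆ Z := by
    simpa only [compl_compl] using frontier_connectedComponentIn_subset_compl hZ.isOpen_compl x₀
  obtain ⟨γ, hγ₀, hγ⟩ := exists_forall_mem_Icc_hasDerivAt_of_isCompact_closure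
    hC.isCompact_closure (hlip.mono (prod_mono_right (subset_univ _))) hfrontier ht₀
    (mem_connectedComponentIn hx₀)
  exact ⟨γ, hγ₀, fun t ht ↦ (hγ t ht).2⟩

end Completeness

/-- **Lemma 6.5 (analytic core, completeness).** Let `v : ℝ × E → E` be a continuous,
locally Lipschitz time-dependent vector field on a finite-dimensional real normed
space `E`. If `v` vanishes at all times `t ∈ [0,1]` on a closed set `S ⊆ E` whose
complement has only bounded connected components, then through every initial point
the ODE `γ' = v (t, γ t)` has a solution defined on all of `[0,1]`. -/
theorem ode_complete_of_vanishing_on_closed_set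
    {E : Type*} [NormedAddCommGroup E] [NormedSpace ℝ E] [FiniteDimensional ℝ E]
    (v : ℝ × E → E) (hv : Continuous v)
    (hlip : ∀ p : ℝ × E, ∃ U ∈ nhds p, ∃ K : NNReal, LipschitzOnWith K v U)
    (S : Set E) (hS : IsClosed S)
    (hzero : ∀ x ∈ S, ∀ t ∈ Icc (0 : ℝ) 1, v (t, x) = 0)
    (hbounded : ∀ x ∈ Sᶜ, Bornology.IsBounded (connectedComponentIn Sᶜ x)) :
    ∀ x₀ : E, ∃ γ : ℝ → E, γ 0 = x₀ ∧
      ∀ t ∈ Icc (0 : ℝ) 1, HasDerivAt γ (v (t, γ t)) t :=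
  have hv' : LocallyLipschitz v := fun p ↦ let ⟨U, hU, K, hK⟩ := hlip p; ⟨K, U, hU, hK⟩
  ode_complete_of_vanishing_on_closed_set_general hv'.locallyLipschitzOn hzero hbounded (by simp)
end

section
/- Let E be a finite-dimensional real normed vector space and let v : ℝ × E → E be continuous and locally Lipschitz (every point of ℝ × E has a neighbourhood on which v is Lipschitz). Let S ⊆ E be a closed set with v(t, x) = 0 for all x ∈ S and all t ∈ ℝ. Let J ⊆ ℝ be an interval, t₀ ∈ J, and γ : J → E a solution of γ'(t) = v(t, γ(t)) for all t ∈ J. If γ(t₀) ∉ S, then for every t ∈ J the point γ(t) lies in the connected component of γ(t₀) in E ∖ S; in particular, γ never meets S. -/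
open Set

/-!
The constant curve at a point of the zero set is a solution. By uniqueness, a solution that meets
the zero set is therefore constant and lies in it at every time. A solution starting off the zero
set thus maps the interval `J` onto a connected subset of the complement.
-/

open scoped NNReal

lemma exists_lipschitzOnWith_pair_of_locallyLipschitzOn
    {T X Y : Type*} [PseudoMetricSpace T] [PseudoMetricSpace X] [PseudoMetricSpace Y]
    {v : T × X → Y} {D : Set (T × X)} {I : Set T} {f g : T → X}
    (hv : LocallyLipschitzOn D v) (hI : IsCompact I)
    (hf : ContinuousOn f I) (hfD : ∀ t ∈ I, (t, f t) ∈ D)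
    (hg : ContinuousOn g I) (hgD : ∀ t ∈ I, (t, g t) ∈ D) :
    ∃ K : ℝ≥0, ∀ t ∈ I, LipschitzOnWith K (fun x ↦ v (t, x)) {f t, g t} := by
  let graphs : Set (T × X) := (fun t ↦ (t, f t)) '' I ∪ (fun t ↦ (t, g t)) '' I
  have hgraphs : IsCompact graphs :=
    (hI.image_of_continuousOn (continuousOn_id.prodMk hf)).union
      (hI.image_of_continuousOn (continuousOn_id.prodMk hg))
  have hgraphsD : graphs ⊆ D := union_subset (image_subset_iff.2 hfD) (image_subset_iff.2 hgD)
  obtain ⟨K, hK⟩ := (hv.mono hgraphsD).exists_lipschitzOnWith_of_compact hgraphs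
  refine ⟨K, fun t ht ↦ ?_⟩
  have hslice : MapsTo (Prod.mk t) {f t, g t} graphs := by
    rintro x (rfl | rfl)
    · exact .inl (mem_image_of_mem _ ht)
    · exact .inr (mem_image_of_mem _ ht)
  simpa only [mul_one, Function.comp_def] using
    hK.comp (LipschitzWith.prodMk_left t).lipschitzOnWith hslice

section ODE

variable {E : Type*} [NormedAddCommGroup E] [NormedSpace ℝ E] {v : ℝ × E → E} {J : Set ℝ} {t₀ : ℝ}

lemma ODE_solution_eq_left_iff_eq_right {f g : ℝ → E} {D : Set (ℝ × E)} {a b : ℝ}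
    (hv : LocallyLipschitzOn D v) (hab : a ≤ b)
    (hf : ∀ t ∈ Icc a b, HasDerivWithinAt f (v (t, f t)) (Icc a b) t)
    (hfD : ∀ t ∈ Icc a b, (t, f t) ∈ D)
    (hg : ∀ t ∈ Icc a b, HasDerivWithinAt g (v (t, g t)) (Icc a b) t)
    (hgD : ∀ t ∈ Icc a b, (t, g t) ∈ D) :
    f a = g a ↔ f b = g b := by
  have hf_cont : ContinuousOn f (Icc a b) := fun t ht ↦ (hf t ht).continuousWithinAt
  have hg_cont : ContinuousOn g (Icc a b) := fun t ht ↦ (hg t ht).continuousWithinAt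
  obtain ⟨K, hK⟩ := exists_lipschitzOnWith_pair_of_locallyLipschitzOn hv isCompact_Icc
    hf_cont hfD hg_cont hgD
  constructor
  · intro ha
    have hIco {t : ℝ} (ht : t ∈ Ico a b) : t ∈ Icc a b := Ico_subset_Icc_self ht
    exact ODE_solution_unique_of_mem_Icc_right (v := fun t x ↦ v (t, x)) (fun t ht ↦ hK t (hIco ht))
      hf_cont (fun t ht ↦ (hf t (hIco ht)).mono_of_mem_nhdsWithin (Icc_mem_nhdsGE_of_mem ht))
      (fun _ _ ↦ mem_insert _ _)
      hg_cont (fun t ht ↦ (hg t (hIco ht)).mono_of_mem_nhdsWithin (Icc_mem_nhdsGE_of_mem ht))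
      (fun _ _ ↦ mem_insert_of_mem _ rfl) ha (right_mem_Icc.2 hab)
  · intro hb
    have hIoc {t : ℝ} (ht : t ∈ Ioc a b) : t ∈ Icc a b := Ioc_subset_Icc_self ht
    exact ODE_solution_unique_of_mem_Icc_left (v := fun t x ↦ v (t, x)) (fun t ht ↦ hK t (hIoc ht))
      hf_cont (fun t ht ↦ (hf t (hIoc ht)).mono_of_mem_nhdsWithin (Icc_mem_nhdsLE_of_mem ht))
      (fun _ _ ↦ mem_insert _ _)
      hg_cont (fun t ht ↦ (hg t (hIoc ht)).mono_of_mem_nhdsWithin (Icc_mem_nhdsLE_of_mem ht))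
      (fun _ _ ↦ mem_insert_of_mem _ rfl) hb (left_mem_Icc.2 hab)

theorem ODE_solution_unique_of_locallyLipschitzOn {f g : ℝ → E} {D : Set (ℝ × E)}
    (hv : LocallyLipschitzOn D v) (hJ : J.OrdConnected) (ht₀ : t₀ ∈ J)
    (hf : ∀ t ∈ J, HasDerivWithinAt f (v (t, f t)) J t) (hfD : ∀ t ∈ J, (t, f t) ∈ D)
    (hg : ∀ t ∈ J, HasDerivWithinAt g (v (t, g t)) J t) (hgD : ∀ t ∈ J, (t, g t) ∈ D)
    (heq : f t₀ = g t₀) :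
    EqOn f g J := by
  have eq_left_iff_eq_right {a b : ℝ} (ha : a ∈ J) (hb : b ∈ J) (hab : a ≤ b) :
      f a = g a ↔ f b = g b := by
    have hIcc : Icc a b ⊆ J := hJ.out ha hb
    exact ODE_solution_eq_left_iff_eq_right hv hab
      (fun t ht ↦ (hf t (hIcc ht)).mono hIcc) (fun t ht ↦ hfD t (hIcc ht))
      (fun t ht ↦ (hg t (hIcc ht)).mono hIcc) (fun t ht ↦ hgD t (hIcc ht))
  intro t ht
  rcases le_total t₀ t with hle | hle
  · exact (eq_left_iff_eq_right ht₀ ht hle).1 heq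
  · exact (eq_left_iff_eq_right ht ht₀ hle).2 heq

theorem ODE_solution_eqOn_const_of_equilibrium {γ : ℝ → E} {U : Set E}
    (hv : LocallyLipschitzOn (J ×ˢ U) v) (hJ : J.OrdConnected) (ht₀ : t₀ ∈ J)
    (hγ : ∀ t ∈ J, HasDerivWithinAt γ (v (t, γ t)) J t) (hγU : MapsTo γ J U)
    (hzero : ∀ t ∈ J, v (t, γ t₀) = 0) :
    EqOn γ (fun _ ↦ γ t₀) J := by
  have hconst : ∀ t ∈ J, HasDerivWithinAt (fun _ ↦ γ t₀) (v (t, γ t₀)) J t := fun t ht ↦ by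
    simpa only [hzero t ht] using hasDerivWithinAt_const t J (γ t₀)
  exact ODE_solution_unique_of_locallyLipschitzOn hv hJ ht₀
    hγ (fun t ht ↦ ⟨ht, hγU ht⟩) hconst (fun t ht ↦ ⟨ht, hγU ht₀⟩) rfl

theorem solution_stays_in_component_of_complement_general {γ : ℝ → E} {U S : Set E}
    (hv : LocallyLipschitzOn (J ×ˢ U) v) (hzero : ∀ t ∈ J, ∀ x ∈ U ∩ S, v (t, x) = 0)
    (hJ : J.OrdConnected) (ht₀ : t₀ ∈ J)
    (hγ : ∀ t ∈ J, HasDerivWithinAt γ (v (t, γ t)) J t) (hγU : MapsTo γ J U)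
    (hstart : γ t₀ ∉ S) :
    MapsTo γ J (connectedComponentIn (U \ S) (γ t₀)) := by
  have avoids_zeros : MapsTo γ J (U \ S) := fun t ht ↦ by
    refine ⟨hγU ht, fun hmem ↦ hstart ?_⟩
    have hconst : γ t₀ = γ t := ODE_solution_eqOn_const_of_equilibrium hv hJ ht hγ hγU
      (fun s hs ↦ hzero s hs (γ t) ⟨hγU ht, hmem⟩) ht₀
    rwa [hconst]
  have hcont : ContinuousOn γ J := fun t ht ↦ (hγ t ht).continuousWithinAt
  exact mapsTo_iff_image_subset.2 <|
    (hJ.isPreconnected.image γ hcont).subset_connectedComponentIn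
      (mem_image_of_mem γ ht₀) avoids_zeros.image_subset

end ODE

/-- **Lemma 6.5 (intermediate claim).** Let `v : ℝ × E → E` be a continuous, locally
Lipschitz time-dependent vector field vanishing at all times on a closed set `S`.
A solution `γ` of `γ' = v (t, γ t)` on an interval `J` starting (at `t₀ ∈ J`) outside
`S` stays, for all `t ∈ J`, in the connected component of `γ t₀` in `E \ S`. -/
theorem solution_stays_in_component_of_complement
    {E : Type*} [NormedAddCommGroup E] [NormedSpace ℝ E] [FiniteDimensional ℝ E]
    (v : ℝ × E → E) (hv : Continuous v)
    (hlip : ∀ p : ℝ × E, ∃ U ∈ nhds p, ∃ K : NNReal, LipschitzOnWith K v U)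
    (S : Set E) (hS : IsClosed S)
    (hzero : ∀ x ∈ S, ∀ t : ℝ, v (t, x) = 0)
    (J : Set ℝ) (hJ : J.OrdConnected) (t₀ : ℝ) (ht₀ : t₀ ∈ J)
    (γ : ℝ → E) (hγ : ∀ t ∈ J, HasDerivAt γ (v (t, γ t)) t)
    (hstart : γ t₀ ∉ S) :
    ∀ t ∈ J, γ t ∈ connectedComponentIn Sᶜ (γ t₀) := by
  have hv_loc : LocallyLipschitz v := fun p ↦ let ⟨U, hU, K, hK⟩ := hlip p; ⟨K, U, hU, hK⟩
  rw [compl_eq_univ_sdiff]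
  exact solution_stays_in_component_of_complement_general
    hv_loc.locallyLipschitzOn (fun t _ x hx ↦ hzero x hx.2 t) hJ ht₀
    (fun t ht ↦ (hγ t ht).hasDerivWithinAt) (mapsTo_univ γ J) hstart
end

section
/- Let G be a connected Lie group and let X be a smooth vector field on G (a C^∞ section g ↦ X g ∈ T_g G of the tangent bundle) which is multiplicative, meaning that for all g, h ∈ G one has X(g·h) = T_{(g,h)}m (X g, X h), where T_{(g,h)}m denotes the differential (mfderiv) at (g, h) of the multiplication map m : G × G → G, under the identification T_{(g,h)}(G × G) ≅ T_g G × T_h G. Then X is complete: for every g₀ ∈ G there exists γ : ℝ → G with γ(0) = g₀ which is a global integral curve of X, i.e. for every t ∈ ℝ the derivative of γ at t equals X(γ(t)). -/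
/-! The points through which a multiplicative vector field has an integral curve on a fixed interval
around `0` form a submonoid, because products of integral curves are integral curves. By
Picard–Lindelöf, some interval `(-ε, ε)` works for all points of a neighbourhood of the identity,
and a submonoid which is a neighbourhood of the identity of a connected topological group is the
whole group. Hence the same `ε` works everywhere, and integral curves extend to all times. -/

open Set Filter
open scoped Topology Manifold ContDiff Pointwise

section TopologicalGroup

variable {G : Type*} [Group G] [TopologicalSpace G] [PreconnectedSpace G]

theorem subgroup_eq_top_of_mem_nhds_one [SeparatelyContinuousMul G] {K : Subgroup G}
    (hK : (K : Set G) ∈ 𝓝 1) : K = ⊤ := by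
  have hopen : IsOpen (K : Set G) := K.isOpen_of_mem_nhds hK
  have hclopen : IsClopen (K : Set G) := ⟨K.isClosed_of_isOpen hopen, hopen⟩
  exact SetLike.coe_injective (hclopen.eq_univ ⟨1, K.one_mem⟩)

theorem submonoid_eq_top_of_mem_nhds_one [IsTopologicalGroup G] {S : Submonoid G}
    (hS : (S : Set G) ∈ 𝓝 1) : S = ⊤ := by
  let K : Subgroup G :=
    { S ⊓ S⁻¹ with inv_mem' := fun {x} hx ↦ ⟨hx.2, by simpa using hx.1⟩ }
  have hK : K = ⊤ := subgroup_eq_top_of_mem_nhds_one (inter_mem hS (inv_mem_nhds_one G hS))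
  refine eq_top_iff.2 fun x _ ↦ ?_
  have hx : x ∈ K := hK ▸ Subgroup.mem_top x
  exact hx.1

end TopologicalGroup

section InteriorPoint

variable {𝕜 : Type*} [NontriviallyNormedField 𝕜]
  {E : Type*} [NormedAddCommGroup E] [NormedSpace 𝕜 E]
  {H : Type*} [TopologicalSpace H] {I : ModelWithCorners 𝕜 E H}
  {M : Type*} [TopologicalSpace M] [ChartedSpace H M] {n : WithTop ℕ∞}

theorem exists_isInteriorPoint [IsManifold I n M] [Nonempty M] (hn : n ≠ 0) :
    ∃ x : M, I.IsInteriorPoint x := by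
  obtain ⟨x₀⟩ := ‹Nonempty M›
  obtain ⟨y, hy⟩ := interior_extChartAt_target_nonempty I x₀
  have hy_target : y ∈ (extChartAt I x₀).target := interior_subset hy
  have hx_source : (extChartAt I x₀).symm y ∈ (chartAt H x₀).source := by
    simpa only [extChartAt_source] using (extChartAt I x₀).map_target hy_target
  refine ⟨(extChartAt I x₀).symm y,
    (I.isInteriorPoint_iff_of_mem_atlas hn (chart_mem_atlas H x₀) hx_source).2 ?_⟩
  change extChartAt I x₀ ((extChartAt I x₀).symm y) ∈ interior (extChartAt I x₀).target
  rwa [(extChartAt I x₀).right_inv hy_target]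

theorem boundarylessManifold_of_isPretransitive
    {E' : Type*} [NormedAddCommGroup E'] [NormedSpace 𝕜 E']
    {H' : Type*} [TopologicalSpace H'] (J : ModelWithCorners 𝕜 E' H')
    (G : Type*) [TopologicalSpace G] [ChartedSpace H' G] [Group G] [MulAction G M]
    [IsManifold I n M] [ContMDiffSMul J I n G M] [MulAction.IsPretransitive G M] (hn : n ≠ 0) :
    BoundarylessManifold I M where
  isInteriorPoint' x := by
    have : Nonempty M := ⟨x⟩
    obtain ⟨z, hz⟩ := exists_isInteriorPoint (I := I) (M := M) hn
    obtain ⟨g, rfl⟩ := MulAction.exists_smul_eq G z x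
    exact (((Diffeomorph.smul J I n g).isLocalDiffeomorph z).isInteriorPoint_iff hn).1 hz

end InteriorPoint

section LocalExistence

variable {E : Type*} [NormedAddCommGroup E] [NormedSpace ℝ E]

theorem exists_eventually_exists_forall_mem_Ioo_mem_hasDerivAt [CompleteSpace E]
    {f : E → E} {x₀ : E} (hf : ContDiffAt ℝ 1 f x₀) (t₀ : ℝ) {U : Set E} (hU : U ∈ 𝓝 x₀) :
    ∃ ε > 0, ∀ᶠ x in 𝓝 x₀, ∃ α : ℝ → E, α t₀ = x ∧
      ∀ t ∈ Ioo (t₀ - ε) (t₀ + ε), α t ∈ U ∧ HasDerivAt α (f (α t)) t := by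
  obtain ⟨ε, hε, a, r, L, K, hr, hpl⟩ := IsPicardLindelof.of_contDiffAt_one hf
  obtain ⟨α, hα, hα_cont⟩ :=
    (hpl t₀).exists_forall_mem_closedBall_eq_hasDerivWithinAt_continuousOn
  have hball : Metric.closedBall x₀ r ∈ 𝓝 x₀ := Metric.closedBall_mem_nhds x₀ hr
  have hstay : ∀ᶠ p in 𝓝 x₀ ×ˢ 𝓝 t₀, α p ∈ U := by
    rw [← nhds_prod_eq]
    refine hα_cont.continuousAt
      (prod_mem_nhds hball (Icc_mem_nhds (by linarith) (by linarith))) ?_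
    rwa [(hα x₀ (mem_of_mem_nhds hball)).1]
  obtain ⟨V, hV, W, hW, hVW⟩ := eventually_prod_iff.1 hstay
  obtain ⟨δ, hδ, hδW⟩ := Metric.eventually_nhds_iff_ball.1 hW
  refine ⟨min ε δ, lt_min hε hδ, ?_⟩
  filter_upwards [hV, hball] with x hxV hx
  refine ⟨fun t ↦ α (x, t), (hα x hx).1, fun t ht ↦ ⟨hVW hxV (hδW t ?_), ?_⟩⟩
  · rw [Real.ball_eq_Ioo]
    exact Ioo_subset_Ioo (by gcongr; exact min_le_right ..) (by gcongr; exact min_le_right ..) ht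
  · have htε : t ∈ Ioo (t₀ - ε) (t₀ + ε) :=
      Ioo_subset_Ioo (by gcongr; exact min_le_left ..) (by gcongr; exact min_le_left ..) ht
    exact ((hα x hx).2 t (Ioo_subset_Icc_self htε)).hasDerivAt (Icc_mem_nhds htε.1 htε.2)

variable {H : Type*} [TopologicalSpace H] {I : ModelWithCorners ℝ E H}
  {M : Type*} [TopologicalSpace M] [ChartedSpace H M] [IsManifold I 1 M]
  {v : (x : M) → TangentSpace I x} {x₀ : M}

theorem mfderiv_extChartAt_eq_tangentCoordChange {x : M} (hx : x ∈ (extChartAt I x₀).source) :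
    mfderiv I 𝓘(ℝ, E) (extChartAt I x₀) x = tangentCoordChange I x x₀ x := by
  rw [extChartAt_source] at hx
  exact (mdifferentiableAt_extChartAt hx).mfderiv

theorem hasMFDerivAt_extChartAt_symm_comp {f : ℝ → E} {t : ℝ}
    {w : TangentSpace I ((extChartAt I x₀).symm (f t))}
    (hft : f t ∈ interior (extChartAt I x₀).target)
    (hf : HasDerivAt f (mfderiv I 𝓘(ℝ, E) (extChartAt I x₀) ((extChartAt I x₀).symm (f t)) w) t) :
    HasMFDerivAt 𝓘(ℝ, ℝ) I ((extChartAt I x₀).symm ∘ f) t ((1 : ℝ →L[ℝ] ℝ).smulRight w) := by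
  have htarget : f t ∈ (extChartAt I x₀).target := interior_subset hft
  have hrange : range I ∈ 𝓝 (f t) :=
    mem_of_superset (mem_interior_iff_mem_nhds.1 hft) (extChartAt_target_subset_range x₀)
  have hsymm : HasMFDerivAt 𝓘(ℝ, E) I (extChartAt I x₀).symm (f t)
      (mfderiv[range I] (extChartAt I x₀).symm (f t)) :=
    (mdifferentiableWithinAt_extChartAt_symm htarget).hasMFDerivWithinAt.hasMFDerivAt hrange
  have hvel : (mfderiv[range I] (extChartAt I x₀).symm (f t)).comp
      ((1 : ℝ →L[ℝ] ℝ).smulRight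
        (mfderiv I 𝓘(ℝ, E) (extChartAt I x₀) ((extChartAt I x₀).symm (f t)) w)) =
      (1 : ℝ →L[ℝ] ℝ).smulRight w := by
    have hinv := DFunLike.congr_fun
      (mfderivWithin_extChartAt_symm_comp_mfderiv_extChartAt htarget) w
    exact ContinuousLinearMap.ext fun c ↦
      (ContinuousLinearMap.map_smul _ c _).trans (congrArg (c • ·) hinv)
  have hcomp := hsymm.comp t hf.hasFDerivAt.hasMFDerivAt
  exact hvel ▸ hcomp

theorem exists_eventually_isMIntegralCurveOn_Ioo [CompleteSpace E]
    (hv : ContMDiffAt I I.tangent 1 (fun x ↦ (⟨x, v x⟩ : TangentBundle I M)) x₀)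
    (hx₀ : I.IsInteriorPoint x₀) (t₀ : ℝ) :
    ∃ ε > 0, ∀ᶠ x in 𝓝 x₀, ∃ γ : ℝ → M, γ t₀ = x ∧
      IsMIntegralCurveOn γ v (Ioo (t₀ - ε) (t₀ + ε)) := by
  have hv_chart := ((contMDiffAt_iff.1 hv).2.contDiffAt (range_mem_nhds_isInteriorPoint hx₀)).snd
  have hU : interior (extChartAt I x₀).target ∈ 𝓝 (extChartAt I x₀ x₀) :=
    isOpen_interior.mem_nhds (I.isInteriorPoint_iff.1 hx₀)
  obtain ⟨ε, hε, hsol⟩ :=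
    exists_eventually_exists_forall_mem_Ioo_mem_hasDerivAt hv_chart t₀ hU
  refine ⟨ε, hε, ?_⟩
  filter_upwards [(continuousAt_extChartAt (I := I) x₀).eventually hsol,
    extChartAt_source_mem_nhds (I := I) x₀] with x ⟨α, hα₀, hα⟩ hx
  refine ⟨(extChartAt I x₀).symm ∘ α, ?_, fun t ht ↦ ?_⟩
  · rw [Function.comp_apply, hα₀, (extChartAt I x₀).left_inv hx]
  · obtain ⟨hα_mem, hα_deriv⟩ := hα t ht
    have hsource : (extChartAt I x₀).symm (α t) ∈ (extChartAt I x₀).source :=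
      (extChartAt I x₀).map_target (interior_subset hα_mem)
    refine (hasMFDerivAt_extChartAt_symm_comp hα_mem ?_).hasMFDerivWithinAt
    rw [mfderiv_extChartAt_eq_tangentCoordChange hsource]
    exact hα_deriv

end LocalExistence

section Multiplicative

variable {𝕜 : Type*} [NontriviallyNormedField 𝕜]
  {E : Type*} [NormedAddCommGroup E] [NormedSpace 𝕜 E]
  {H : Type*} [TopologicalSpace H] {I : ModelWithCorners 𝕜 E H}
  {G : Type*} [TopologicalSpace G] [ChartedSpace H G]

/-- A vector field `X` on `G` is *multiplicative* if `X : G → TG` respects products, where `TG`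
carries the product given by the differential of the multiplication of `G`. -/
def IsMultiplicativeVectorField [Mul G] (X : (g : G) → TangentSpace I g) : Prop :=
  ∀ g h : G, X (g * h) = mfderiv (I.prod I) I (fun p : G × G ↦ p.1 * p.2) (g, h)
    ((X g, X h) : TangentSpace (I.prod I) (g, h))

theorem IsMultiplicativeVectorField.map_one [MulOneClass G] [ContMDiffMul I 1 G]
    {X : (g : G) → TangentSpace I g} (hX : IsMultiplicativeVectorField X) : X 1 = 0 := by
  have hmul := hX 1 1
  have hadd := mfderiv_prod_eq_add_apply (p := (1, 1))
    (v := ((X 1, X 1) : TangentSpace (I.prod I) ((1, 1) : G × G)))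
    ((contMDiff_mul (G := G) I 1).mdifferentiableAt one_ne_zero)
  have hright : HasMFDerivAt I I (fun z : G ↦ z * 1) 1 (ContinuousLinearMap.id 𝕜 E) :=
    (hasMFDerivAt_id (1 : G)).congr_of_eventuallyEq (.of_forall mul_one)
  have hleft : HasMFDerivAt I I (fun z : G ↦ 1 * z) 1 (ContinuousLinearMap.id 𝕜 E) :=
    (hasMFDerivAt_id (1 : G)).congr_of_eventuallyEq (.of_forall one_mul)
  have hone : (X (1 * 1) : E) = X 1 := congrArg (fun g ↦ (X g : E)) (one_mul 1)
  rw [hright.mfderiv, hleft.mfderiv] at hadd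
  exact left_eq_add.1 (hone.symm.trans (hmul.trans hadd))

end Multiplicative

namespace IsMultiplicativeVectorField

variable {E : Type*} [NormedAddCommGroup E] [NormedSpace ℝ E]
  {H : Type*} [TopologicalSpace H] {I : ModelWithCorners ℝ E H}
  {G : Type*} [TopologicalSpace G] [ChartedSpace H G]

theorem isMIntegralCurveOn_mul [Mul G] [ContMDiffMul I 1 G] {X : (g : G) → TangentSpace I g}
    (hX : IsMultiplicativeVectorField X) {γ η : ℝ → G} {s : Set ℝ}
    (hγ : IsMIntegralCurveOn γ X s) (hη : IsMIntegralCurveOn η X s) :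
    IsMIntegralCurveOn (γ * η) X s := by
  intro t ht
  have hmul : MDifferentiableAt (I.prod I) I (fun p : G × G ↦ p.1 * p.2) (γ t, η t) :=
    (contMDiff_mul I 1).mdifferentiableAt one_ne_zero
  have hderiv := hmul.hasMFDerivAt.comp_hasMFDerivWithinAt t ((hγ t ht).prodMk (hη t ht))
  have hvel : (mfderiv (I.prod I) I (fun p : G × G ↦ p.1 * p.2) (γ t, η t)).comp
      (((1 : ℝ →L[ℝ] ℝ).smulRight (X (γ t))).prod ((1 : ℝ →L[ℝ] ℝ).smulRight (X (η t)))) =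
      (1 : ℝ →L[ℝ] ℝ).smulRight (X (γ t * η t)) := by
    rw [hX]
    ext
    exact ((mfderiv (I.prod I) I (fun p : G × G ↦ p.1 * p.2) (γ t, η t)).map_smul (1 : ℝ)
      ((X (γ t), X (η t)) : TangentSpace (I.prod I) (γ t, η t)))
  exact hvel ▸ hderiv

/-- The domain of the flow of `X` for times in `s`, i.e. the initial points of the integral curves
defined on `s`. -/
def flowDomain [MulOneClass G] [ContMDiffMul I 1 G] {X : (g : G) → TangentSpace I g}
    (hX : IsMultiplicativeVectorField X) (s : Set ℝ) : Submonoid G where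
  carrier := {x | ∃ γ : ℝ → G, γ 0 = x ∧ IsMIntegralCurveOn γ X s}
  one_mem' := ⟨fun _ ↦ 1, rfl, (isMIntegralCurve_const hX.map_one).isMIntegralCurveOn s⟩
  mul_mem' := by
    rintro _ _ ⟨γ, rfl, hγ⟩ ⟨η, rfl, hη⟩
    exact ⟨γ * η, rfl, hX.isMIntegralCurveOn_mul hγ hη⟩

end IsMultiplicativeVectorField

theorem multiplicative_vector_field_complete_general
    {E : Type*} [NormedAddCommGroup E] [NormedSpace ℝ E] [CompleteSpace E]
    {H : Type*} [TopologicalSpace H] {I : ModelWithCorners ℝ E H}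
    {G : Type*} [TopologicalSpace G] [ChartedSpace H G] [Group G]
    [LieGroup I 1 G] [ConnectedSpace G]
    (X : (g : G) → TangentSpace I g)
    (hX : ContMDiff I I.tangent 1 (fun g : G ↦ (⟨g, X g⟩ : TangentBundle I G)))
    (hmult : IsMultiplicativeVectorField X) (g₀ : G) :
    ∃ γ : ℝ → G, γ 0 = g₀ ∧ IsMIntegralCurve γ X := by
  have : IsTopologicalGroup G := topologicalGroup_of_lieGroup I 1
  have : T1Space G := I.t1Space G
  have : BoundarylessManifold I G := boundarylessManifold_of_isPretransitive I G one_ne_zero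
  obtain ⟨ε, hε, hlocal⟩ := exists_eventually_isMIntegralCurveOn_Ioo (hX 1)
    BoundarylessManifold.isInteriorPoint 0
  simp only [zero_sub, zero_add] at hlocal
  have htop : hmult.flowDomain (Ioo (-ε) ε) = ⊤ := submonoid_eq_top_of_mem_nhds_one hlocal
  have hexists : ∀ g : G, g ∈ hmult.flowDomain (Ioo (-ε) ε) := fun g ↦ htop ▸ Submonoid.mem_top g
  exact exists_isMIntegralCurve_of_isMIntegralCurveOn hX hε hexists g₀

/-- **Lemma 5.8 (Lie group case).** A smooth multiplicative vector field on a
connected Lie group is complete: through every point there is a global integral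
curve. -/
theorem multiplicative_vector_field_complete
    {E : Type*} [NormedAddCommGroup E] [NormedSpace ℝ E] [FiniteDimensional ℝ E]
    {H : Type*} [TopologicalSpace H] {I : ModelWithCorners ℝ E H}
    {G : Type*} [TopologicalSpace G] [ChartedSpace H G] [Group G]
    [LieGroup I (⊤ : ℕ∞) G] [ConnectedSpace G]
    (X : (g : G) → TangentSpace I g)
    (hX : ContMDiff I I.tangent (⊤ : ℕ∞) (fun g : G => (⟨g, X g⟩ : TangentBundle I G)))
    (hmult : ∀ g h : G,
      X (g * h) = mfderiv (I.prod I) I (fun p : G × G => p.1 * p.2) (g, h)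
        ((X g, X h) : TangentSpace (I.prod I) (g, h))) :
    ∀ g₀ : G, ∃ γ : ℝ → G, γ 0 = g₀ ∧ IsMIntegralCurve γ X := by
  have : CompleteSpace E := FiniteDimensional.complete ℝ E
  exact multiplicative_vector_field_complete_general X (hX.of_le (mod_cast le_top)) hmult
end
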